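/- Let g ∈ C²(ℝ) with g, g', g'' ∈ L²(ℝ, dx), and let Δx > 0. Then ∑_{l∈ℤ} g(l·Δx)² · Δx ≤ ‖g‖²_{L²(ℝ)} + (Δx²/6)·(‖g'‖²_{L²(ℝ)} + ‖g‖_{L²(ℝ)}·‖g''‖_{L²(ℝ)}). -/

import Mathlib

open MeasureTheory Real

lemma trapezoid_cell (F F' F'' : ℝ → ℝ) (hF : ∀ x, HasDerivAt F (F' x) x)
    (hF' : ∀ x, HasDerivAt F' (F'' x) x) (hc : Continuous F'') (a : ℝ) :
    (F a + F (a + 1)) / 2 ≤ ∫ x in a..(a + 1), (F x + (|F'' x| / 16 + F'' x / 16)) := by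
  have cF : Continuous F := continuous_iff_continuousAt.2 fun x => (hF x).continuousAt
  have key : ∫ x in a..(a + 1), (F'' x * ((x - a) * (a + 1 - x) / 2) + F x)
      = (F a + F (a + 1)) / 2 := by
    have hd : ∀ x ∈ Set.uIcc a (a + 1),
        HasDerivAt (fun x => F' x * ((x - a) * (a + 1 - x) / 2) - F x * ((2 * a + 1 - 2 * x) / 2))
          (F'' x * ((x - a) * (a + 1 - x) / 2) + F x) x := by
      intro x _
      have e1 : HasDerivAt (fun x : ℝ => (x - a) * (a + 1 - x) / 2)
          ((1 * (a + 1 - x) + (x - a) * (-1)) / 2) x :=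
        (((hasDerivAt_id x).sub_const a).mul ((hasDerivAt_id x).const_sub (a + 1))).div_const 2
      have e2 : HasDerivAt (fun x : ℝ => (2 * a + 1 - 2 * x) / 2) ((-(2 * 1)) / 2) x :=
        ((((hasDerivAt_id x).const_mul 2).const_sub (2 * a + 1))).div_const 2
      refine (((hF' x).mul e1).sub ((hF x).mul e2)).congr_deriv ?_
      ring
    rw [intervalIntegral.integral_eq_sub_of_hasDerivAt hd
      (Continuous.intervalIntegrable (by fun_prop) _ _)]
    ring
  rw [← key]
  apply intervalIntegral.integral_mono_on (by linarith)
    (Continuous.intervalIntegrable (by fun_prop) _ _)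
    (Continuous.intervalIntegrable (by fun_prop) _ _)
  intro x hx
  have k0 : 0 ≤ (x - a) * (a + 1 - x) / 2 := by
    have := mul_nonneg (sub_nonneg.2 hx.1) (sub_nonneg.2 hx.2)
    linarith
  have k1 : (x - a) * (a + 1 - x) / 2 ≤ 1 / 8 := by nlinarith [sq_nonneg (2 * (x - a) - 1)]
  rcases abs_cases (F'' x) with h | h <;> rw [h.1] <;> nlinarith

lemma sum_le_of_unit (F F' F'' : ℝ → ℝ) (hF : ∀ x, HasDerivAt F (F' x) x)
    (hF' : ∀ x, HasDerivAt F' (F'' x) x) (hc : Continuous F'') (hpos : ∀ x, 0 ≤ F x)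
    (i0 : Integrable F) (i1 : Integrable F') (i2 : Integrable F'') :
    ∑' l : ℤ, F l ≤ (∫ x, F x) + (∫ x, |F'' x|) / 16 := by
  have i3 : Integrable (fun x => |F'' x| / 16) := i2.abs.div_const 16
  have i4 : Integrable (fun x => F'' x / 16) := i2.div_const 16
  have hS := (i0.add (i3.add i4)).hasSum_intervalIntegral 0
  have hz : ∫ x, F'' x = 0 := integral_eq_zero_of_hasDerivAt_of_integrable hF' i2 i1
  have htot : ∫ x, (F + ((fun x => |F'' x| / 16) + fun x => F'' x / 16)) x
      = (∫ x, F x) + (∫ x, |F'' x|) / 16 := by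
    rw [integral_add' i0 (i3.add i4), integral_add' i3 i4, integral_div, integral_div, hz]
    ring
  rw [htot] at hS
  have hle : ∀ l : ℤ, (F l + F ((l + 1 : ℤ) : ℝ)) / 2 ≤ ∫ x in (0 + (l : ℝ))..(0 + l + 1),
      (F + ((fun x => |F'' x| / 16) + fun x => F'' x / 16)) x := by
    intro l
    have := trapezoid_cell F F' F'' hF hF' hc l
    simpa using this
  have s1 : Summable (fun l : ℤ => (F l + F ((l + 1 : ℤ) : ℝ)) / 2) :=
    Summable.of_nonneg_of_le (fun l => by have := hpos l; have := hpos ((l + 1 : ℤ) : ℝ); linarith)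
      hle hS.summable
  have s2 : Summable (fun l : ℤ => F l) := by
    refine Summable.of_nonneg_of_le (fun l => hpos l) (fun l => ?_) (s1.mul_left 2)
    have := hpos ((l + 1 : ℤ) : ℝ)
    linarith
  have s3 : HasSum (fun l : ℤ => F ((l + 1 : ℤ) : ℝ)) (∑' l : ℤ, F l) :=
    (Equiv.addRight (1 : ℤ)).hasSum_iff.2 s2.hasSum
  have s4 := (s2.hasSum.add s3).div_const 2
  have := hasSum_le hle s4 hS
  linarith

lemma cs_bound (u v : ℝ → ℝ) (cu : Continuous u) (cv : Continuous v)
    (h0 : Integrable (fun x => (u x) ^ 2)) (h2 : Integrable (fun x => (v x) ^ 2)) :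
    ∫ x, |u x * v x| ≤ Real.sqrt (∫ x, (u x) ^ 2) * Real.sqrt (∫ x, (v x) ^ 2) := by
  have m0 : MemLp u (ENNReal.ofReal 2) := by
    rw [show ENNReal.ofReal 2 = 2 by simp]
    exact (memLp_two_iff_integrable_sq cu.aestronglyMeasurable).2 h0
  have m2 : MemLp v (ENNReal.ofReal 2) := by
    rw [show ENNReal.ofReal 2 = 2 by simp]
    exact (memLp_two_iff_integrable_sq cv.aestronglyMeasurable).2 h2
  have := integral_mul_norm_le_Lp_mul_Lq (Real.HolderConjugate.two_two) m0 m2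
  simpa [abs_mul, Real.sqrt_eq_rpow] using this

theorem discrete_l2_norm_le
    (g : ℝ → ℝ) (hg : ContDiff ℝ 2 g)
    (h0 : Integrable (fun x => (g x) ^ 2))
    (h1 : Integrable (fun x => (deriv g x) ^ 2))
    (h2 : Integrable (fun x => (deriv (deriv g) x) ^ 2))
    (Δx : ℝ) (hΔx : 0 < Δx) :
    (∑' l : ℤ, (g (l * Δx)) ^ 2 * Δx) ≤
      (∫ x : ℝ, (g x) ^ 2) +
        Δx ^ 2 / 6 *
          ((∫ x : ℝ, (deriv g x) ^ 2) +
            Real.sqrt (∫ x : ℝ, (g x) ^ 2) *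
              Real.sqrt (∫ x : ℝ, (deriv (deriv g) x) ^ 2)) := by
  have hg' : ContDiff ℝ 1 (deriv g) := by
    have : ContDiff ℝ (1 + 1) g := by simpa [one_add_one_eq_two] using hg
    exact (contDiff_succ_iff_deriv.1 this).2.2
  have c0 : Continuous g := hg.continuous
  have c1 : Continuous (deriv g) := hg'.continuous
  have c2 : Continuous (deriv (deriv g)) := hg'.continuous_deriv le_rfl
  have d0 : ∀ x, HasDerivAt g (deriv g x) x := fun x =>
    (hg.differentiable (by norm_num) x).hasDerivAt
  have d1 : ∀ x, HasDerivAt (deriv g) (deriv (deriv g) x) x := fun x =>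
    (hg'.differentiable (by norm_num) x).hasDerivAt
  have m0 := (memLp_two_iff_integrable_sq c0.aestronglyMeasurable).2 h0
  have m1 := (memLp_two_iff_integrable_sq c1.aestronglyMeasurable).2 h1
  have m2 := (memLp_two_iff_integrable_sq c2.aestronglyMeasurable).2 h2
  have p1 : Integrable (fun x => g x * deriv g x) := m0.integrable_mul m1
  have p2 : Integrable (fun x => g x * deriv (deriv g) x) := m0.integrable_mul m2
  have hne : Δx ≠ 0 := hΔx.ne'
  have hm : ∀ x, HasDerivAt (fun x : ℝ => x * Δx) Δx x := fun x => by
    simpa using (hasDerivAt_id x).mul_const Δx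
  have e0 : ∀ x, HasDerivAt (fun x => g (x * Δx)) (deriv g (x * Δx) * Δx) x := fun x =>
    (d0 (x * Δx)).comp x (hm x)
  have e1 : ∀ x, HasDerivAt (fun x => deriv g (x * Δx)) (deriv (deriv g) (x * Δx) * Δx) x :=
    fun x => HasDerivAt.comp (h₂ := deriv g) (h := fun x => x * Δx) x (d1 (x * Δx)) (hm x)
  have q2 : Integrable (fun x => deriv g x ^ 2 + g x * deriv (deriv g) x) := h1.add p2
  have main := sum_le_of_unit (fun x => g (x * Δx) ^ 2)
    (fun x => 2 * Δx * (g (x * Δx) * deriv g (x * Δx)))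
    (fun x => 2 * Δx ^ 2 * (deriv g (x * Δx) ^ 2 + g (x * Δx) * deriv (deriv g) (x * Δx)))
    (fun x => ((e0 x).pow 2).congr_deriv (by simp; ring))
    (fun x => (((e0 x).mul (e1 x)).const_mul (2 * Δx)).congr_deriv (by ring))
    (by fun_prop) (fun x => sq_nonneg _)
    (h0.comp_mul_right' hne) ((p1.comp_mul_right' hne).const_mul _)
    ((q2.comp_mul_right' hne).const_mul _)
  have r0 : ∫ x, g (x * Δx) ^ 2 = Δx⁻¹ * ∫ x, g x ^ 2 := by
    rw [Measure.integral_comp_mul_right (fun x => g x ^ 2) Δx, abs_of_pos (inv_pos.2 hΔx),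
      smul_eq_mul]
  have r2 : ∫ x, |2 * Δx ^ 2 * (deriv g (x * Δx) ^ 2 + g (x * Δx) * deriv (deriv g) (x * Δx))|
      = 2 * Δx ^ 2 * (Δx⁻¹ * ∫ x, |deriv g x ^ 2 + g x * deriv (deriv g) x|) := by
    simp_rw [abs_mul (2 * Δx ^ 2), abs_of_pos (show 0 < 2 * Δx ^ 2 by positivity)]
    rw [integral_const_mul,
      Measure.integral_comp_mul_right (fun x => |deriv g x ^ 2 + g x * deriv (deriv g) x|) Δx,
      abs_of_pos (inv_pos.2 hΔx), smul_eq_mul]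
  have r3 : ∫ x, |deriv g x ^ 2 + g x * deriv (deriv g) x| ≤
      (∫ x : ℝ, (deriv g x) ^ 2) + Real.sqrt (∫ x : ℝ, (g x) ^ 2) *
              Real.sqrt (∫ x : ℝ, (deriv (deriv g) x) ^ 2) := by
    have a1 := cs_bound g (deriv (deriv g)) c0 c2 h0 h2
    have a2 : ∫ x, |deriv g x ^ 2 + g x * deriv (deriv g) x| ≤
        ∫ x, (deriv g x ^ 2 + |g x * deriv (deriv g) x|) := by
      refine integral_mono q2.abs (h1.add p2.abs) fun x => ?_
      have := abs_add_le (deriv g x ^ 2) (g x * deriv (deriv g) x)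
      rwa [abs_of_nonneg (sq_nonneg (deriv g x))] at this
    rw [integral_add h1 p2.abs] at a2
    linarith
  have rn : 0 ≤ ∫ x, |deriv g x ^ 2 + g x * deriv (deriv g) x| :=
    integral_nonneg fun x => abs_nonneg _
  rw [r0, r2] at main
  rw [tsum_mul_right]
  generalize (∫ x : ℝ, (deriv g x) ^ 2) + Real.sqrt (∫ x : ℝ, (g x) ^ 2) *
              Real.sqrt (∫ x : ℝ, (deriv (deriv g) x) ^ 2) = B at *
  generalize (∫ x, |deriv g x ^ 2 + g x * deriv (deriv g) x|) = J at *
  have hmul := mul_le_mul_of_nonneg_right main hΔx.le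
  refine hmul.trans ?_
  have : (Δx⁻¹ * (∫ x, g x ^ 2) + 2 * Δx ^ 2 * (Δx⁻¹ * J) / 16) * Δx
      = (∫ x, g x ^ 2) + Δx ^ 2 / 8 * J := by
    field_simp
    ring
  rw [this]
  have hsq : 0 < Δx ^ 2 := by positivity
  nlinarith [mul_le_mul_of_nonneg_left r3 hsq.le, mul_nonneg hsq.le rn]
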